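/- For every non-dyadic source (some probability is not an integer power of 1/2), every Huffman code strictly competitively dominates every Shannon–Fano code: the probability of symbols where the Huffman codeword is strictly shorter than the Shannon–Fano codeword exceeds the probability of symbols where it is strictly longer. Conversely, for dyadic sources the two codes are length equivalent and the competitive advantage is zero. -/

import Mathlib

/-!
Write `q i = 2 ^ (-l i)`. The code `l` beats Shannon–Fano on `W = {p < q}` and loses to it on
`L = {2 * q ≤ p}`. Let `2 ^ (-a)` and `2 ^ (-b)` be the largest integer powers of `1 / 2` not above
the Kraft sums of `W` and `L`; both are attained by subsets `X ⊆ W` and `Y ⊆ L`. Since `Y` has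
probability at least `2 ^ (-(b - 1))`, strong monotonicity gives the same bound for every set of
Kraft sum `2 ^ (-(b - 1))`. Such sets tile the words of length at least `b - 1`, which are thus more
probable than their Kraft sum; as both totals are `1`, some shorter word lies in `W`, so
`a < b - 1`. Hence `L` lies strictly inside a set of Kraft sum `2 ^ (-(a + 1))`, and strong
monotonicity gives `P L < P X ≤ P W`.

For dyadic `p`, the pointwise bound `p - q ≤ 1_L * p - 1_W * p` sums to `P W ≤ P L`, which leaves
`W = ∅` and therefore `p = q`.
-/

section HalfPow

lemma half_pow_eq_two_pow_mul {c g : ℕ} (h : c ≤ g) :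
    ((1 : ℝ) / 2) ^ c = 2 ^ (g - c) * (1 / 2) ^ g := by
  obtain ⟨d, rfl⟩ := Nat.exists_eq_add_of_le h
  rw [Nat.add_sub_cancel_left, pow_add, mul_left_comm, ← mul_pow]
  norm_num

lemma half_pow_lt_half_pow_iff {a b : ℕ} : ((1 : ℝ) / 2) ^ a < (1 / 2) ^ b ↔ b < a :=
  pow_lt_pow_iff_right_of_lt_one₀ (by norm_num) (by norm_num)

lemma half_pow_le_half_pow_iff {a b : ℕ} : ((1 : ℝ) / 2) ^ a ≤ (1 / 2) ^ b ↔ b ≤ a :=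
  pow_le_pow_iff_right_of_lt_one₀ (by norm_num) (by norm_num)

lemma two_mul_half_pow_succ (a : ℕ) : 2 * ((1 : ℝ) / 2) ^ (a + 1) = (1 / 2) ^ a := by
  ring

lemma two_mul_half_pow_le_of_lt {a b : ℕ} (h : ((1 : ℝ) / 2) ^ a < (1 / 2) ^ b) :
    2 * ((1 : ℝ) / 2) ^ a ≤ (1 / 2) ^ b := by
  obtain ⟨c, rfl⟩ := Nat.exists_eq_succ_of_ne_zero (half_pow_lt_half_pow_iff.1 h).ne_bot
  rw [two_mul_half_pow_succ, half_pow_le_half_pow_iff]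
  exact Nat.le_of_lt_succ (half_pow_lt_half_pow_iff.1 h)

end HalfPow

section ShannonFano

/-- The Shannon–Fano codeword length of a symbol of probability `x`; it is integer-valued because
`⌈log₂ (1 / x)⌉` is negative for `2 ≤ x`. -/
noncomputable def shannonFanoLength (x : ℝ) : ℤ :=
  ⌈Real.logb 2 (1 / x)⌉

variable {x : ℝ}

lemma natCast_lt_shannonFanoLength_iff (hx : 0 < x) (k : ℕ) :
    (k : ℤ) < shannonFanoLength x ↔ x < (1 / 2) ^ k := by
  rw [shannonFanoLength, Int.lt_ceil, Int.cast_natCast,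
    Real.lt_logb_iff_rpow_lt one_lt_two (one_div_pos.2 hx), Real.rpow_natCast, one_div_pow,
    lt_one_div (by positivity) hx]

lemma shannonFanoLength_lt_natCast_iff (hx : 0 < x) (k : ℕ) :
    shannonFanoLength x < k ↔ 2 * (1 / 2) ^ k ≤ x := by
  have hk : (2 : ℝ) ^ ((k : ℝ) - 1) = 1 / (2 * (1 / 2) ^ k) := by
    rw [Real.rpow_sub_one two_ne_zero, Real.rpow_natCast, one_div_pow]
    field_simp
  rw [shannonFanoLength, ← Int.le_sub_one_iff, Int.ceil_le, Int.cast_sub, Int.cast_one,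
    Int.cast_natCast, Real.logb_le_iff_le_rpow one_lt_two (one_div_pos.2 hx), hk,
    one_div_le_one_div hx (by positivity)]

lemma shannonFanoLength_half_pow (m : ℕ) : shannonFanoLength ((1 / 2) ^ m) = m := by
  have hm : (0 : ℝ) < (1 / 2) ^ m := by positivity
  apply le_antisymm <;> rw [← not_lt]
  · rw [natCast_lt_shannonFanoLength_iff hm]
    exact lt_irrefl _
  · rw [shannonFanoLength_lt_natCast_iff hm, not_le]
    exact lt_two_mul_self hm

end ShannonFano

section KraftSum

variable {ι : Type*}

/-- The Kraft sum of the codeword lengths `l` restricted to the symbols in `S`. A set of Kraft sum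
`2 ^ (-c)` plays the role of the set of leaves below a node at depth `c` of the code tree. -/
noncomputable def kraftSum (l : ι → ℕ) (S : Finset ι) : ℝ :=
  ∑ i ∈ S, ((1 : ℝ) / 2) ^ l i

variable {l : ι → ℕ} {S T : Finset ι} {c : ℕ}

lemma kraftSum_nonneg (l : ι → ℕ) (S : Finset ι) : 0 ≤ kraftSum l S :=
  Finset.sum_nonneg fun _ _ => by positivity

lemma kraftSum_pos (hS : S.Nonempty) : 0 < kraftSum l S :=
  Finset.sum_pos (fun _ _ => by positivity) hS

lemma nonempty_of_kraftSum_pos (h : 0 < kraftSum l S) : S.Nonempty :=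
  Finset.nonempty_of_sum_ne_zero h.ne'

lemma kraftSum_mono (h : S ⊆ T) : kraftSum l S ≤ kraftSum l T :=
  Finset.sum_le_sum_of_subset_of_nonneg h fun _ _ _ => by positivity

lemma half_pow_le_kraftSum {i : ι} (hi : i ∈ S) : ((1 : ℝ) / 2) ^ l i ≤ kraftSum l S :=
  Finset.single_le_sum (f := fun i => ((1 : ℝ) / 2) ^ l i) (fun _ _ => by positivity) hi

lemma kraftSum_sdiff [DecidableEq ι] (h : S ⊆ T) :
    kraftSum l (T \ S) = kraftSum l T - kraftSum l S :=
  eq_sub_of_add_eq (Finset.sum_sdiff h)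

lemma le_length_of_kraftSum_le (h : kraftSum l S ≤ (1 / 2) ^ c) {i : ι} (hi : i ∈ S) : c ≤ l i :=
  half_pow_le_half_pow_iff.1 ((half_pow_le_kraftSum hi).trans h)

lemma exists_kraftSum_eq_natCast_mul (h : ∀ i ∈ S, l i ≤ c) :
    ∃ k : ℕ, kraftSum l S = k * (1 / 2) ^ c := by
  refine ⟨∑ i ∈ S, 2 ^ (c - l i), ?_⟩
  push_cast
  rw [kraftSum, Finset.sum_mul]
  exact Finset.sum_congr rfl fun i hi => half_pow_eq_two_pow_mul (h i hi)

/-- Discard longest words one at a time: all the quantities involved are multiples of the weight of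
a longest word, so the Kraft sum cannot jump over the target. -/
lemma exists_subset_kraftSum_eq (k : ℕ) (hS : ∀ i ∈ S, c ≤ l i)
    (h : k * (1 / 2) ^ c ≤ kraftSum l S) : ∃ Z ⊆ S, kraftSum l Z = k * (1 / 2) ^ c := by
  classical
  induction S using Finset.strongInduction with
  | H S ih =>
    obtain heq | hlt := h.eq_or_lt
    · exact ⟨S, subset_rfl, heq.symm⟩
    have hne : S.Nonempty := nonempty_of_kraftSum_pos (hlt.trans_le' (by positivity))
    obtain ⟨g, hg, hmax⟩ := S.exists_max_image l hne
    have herase : kraftSum l (S.erase g) = kraftSum l S - (1 / 2) ^ l g :=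
      eq_sub_of_add_eq (Finset.sum_erase_add S _ hg)
    have hstep : k * (1 / 2) ^ c ≤ kraftSum l (S.erase g) := by
      obtain ⟨m, hm⟩ := exists_kraftSum_eq_natCast_mul hmax
      have htarget : k * ((1 : ℝ) / 2) ^ c = (k * 2 ^ (l g - c) : ℕ) * (1 / 2) ^ l g := by
        rw [half_pow_eq_two_pow_mul (hS g hg)]
        push_cast
        ring
      rw [hm, htarget] at hlt
      have hlt' : k * 2 ^ (l g - c) + 1 ≤ m :=
        Nat.cast_lt.1 (lt_of_mul_lt_mul_right hlt (by positivity))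
      rw [herase, hm, htarget, ← sub_one_mul]
      gcongr
      exact le_sub_iff_add_le.2 (mod_cast hlt')
    obtain ⟨Z, hZ, hZk⟩ := ih (S.erase g) (Finset.erase_ssubset hg)
      (fun i hi => hS i (Finset.mem_of_mem_erase hi)) hstep
    exact ⟨Z, hZ.trans (Finset.erase_subset g S), hZk⟩

lemma exists_subset_kraftSum_eq_half_pow (hS : ∀ i ∈ S, c ≤ l i)
    (h : (1 / 2) ^ c ≤ kraftSum l S) : ∃ Z ⊆ S, kraftSum l Z = (1 / 2) ^ c := by
  simpa using exists_subset_kraftSum_eq 1 hS (by simpa using h)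

lemma exists_subset_kraftSum_eq_half_pow_and_lt (hS : S.Nonempty) (h : kraftSum l S ≤ 1) :
    ∃ c, (∀ i ∈ S, c ≤ l i) ∧ kraftSum l S < 2 * (1 / 2) ^ c ∧
      ∃ Z ⊆ S, kraftSum l Z = (1 / 2) ^ c := by
  classical
  have hex : ∃ c : ℕ, ((1 : ℝ) / 2) ^ c ≤ kraftSum l S :=
    let ⟨i, hi⟩ := hS
    ⟨l i, half_pow_le_kraftSum hi⟩
  have hlen : ∀ i ∈ S, Nat.find hex ≤ l i := fun i hi => Nat.find_min' hex (half_pow_le_kraftSum hi)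
  refine ⟨Nat.find hex, hlen, ?_, exists_subset_kraftSum_eq_half_pow hlen (Nat.find_spec hex)⟩
  cases hc : Nat.find hex with
  | zero => linarith
  | succ b =>
    rw [two_mul_half_pow_succ, ← not_le]
    exact Nat.find_min hex (by omega)

lemma natCast_mul_le_sum_of_forall_kraftSum_eq {p : ι → ℝ} {x : ℝ} {k : ℕ}
    (hx : ∀ Z ⊆ T, kraftSum l Z = (1 / 2) ^ c → x ≤ ∑ i ∈ Z, p i) (hT : ∀ i ∈ T, c ≤ l i)
    (hk : kraftSum l T = k * (1 / 2) ^ c) : k * x ≤ ∑ i ∈ T, p i := by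
  classical
  induction k generalizing T with
  | zero =>
    obtain rfl : T = ∅ := by
      by_contra hne
      exact (kraftSum_pos (Finset.nonempty_iff_ne_empty.2 hne)).ne' (by simpa using hk)
    simp
  | succ k ih =>
    push_cast [add_one_mul] at hk ⊢
    obtain ⟨Z, hZT, hZ⟩ := exists_subset_kraftSum_eq_half_pow hT
      (hk ▸ le_add_of_nonneg_left (by positivity))
    have hrest : k * x ≤ ∑ i ∈ T \ Z, p i :=
      ih (fun X hX => hx X (hX.trans Finset.sdiff_subset))
        (fun i hi => hT i (Finset.sdiff_subset hi)) (by rw [kraftSum_sdiff hZT, hk, hZ]; ring)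
    rw [← Finset.sum_sdiff hZT]
    exact add_le_add hrest (hx Z hZT hZ)

end KraftSum

section CompleteCode

variable {ι : Type*} [Fintype ι] {l : ι → ℕ}

lemma exists_kraftSum_filter_le_eq_natCast_mul (hcomplete : kraftSum l Finset.univ = 1) (c : ℕ) :
    ∃ k : ℕ, kraftSum l {i | c ≤ l i} = k * (1 / 2) ^ c := by
  obtain ⟨m, hm⟩ : ∃ m : ℕ, kraftSum l {i | ¬ c ≤ l i} = m * (1 / 2) ^ c :=
    exists_kraftSum_eq_natCast_mul fun i hi => (not_le.1 (Finset.mem_filter.1 hi).2).le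
  have hone : (1 : ℝ) = (2 ^ c : ℕ) * (1 / 2) ^ c := by
    simp
  have hsplit : kraftSum l {i | c ≤ l i} + m * (1 / 2) ^ c = (2 ^ c : ℕ) * (1 / 2) ^ c := by
    rw [← hm, ← hone, ← hcomplete]
    exact Finset.sum_filter_add_sum_filter_not _ _ _
  have hle : m ≤ 2 ^ c := by
    have : m * ((1 : ℝ) / 2) ^ c ≤ (2 ^ c : ℕ) * (1 / 2) ^ c :=
      hsplit ▸ le_add_of_nonneg_left (kraftSum_nonneg l _)
    exact Nat.cast_le.1 (le_of_mul_le_mul_right this (by positivity))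
  exact ⟨2 ^ c - m, by rw [Nat.cast_sub hle, sub_mul, ← hsplit, add_sub_cancel_right]⟩

lemma exists_superset_kraftSum_eq_half_pow (hcomplete : kraftSum l Finset.univ = 1) {c : ℕ}
    {R : Finset ι} (hR : R.Nonempty) (h : kraftSum l R ≤ (1 / 2) ^ c) :
    ∃ Z, R ⊆ Z ∧ kraftSum l Z = (1 / 2) ^ c := by
  classical
  obtain ⟨k, hk⟩ := exists_kraftSum_filter_le_eq_natCast_mul hcomplete c
  set T : Finset ι := {i | c ≤ l i} with hT
  have hRT : R ⊆ T := fun i hi => by simpa [hT] using le_length_of_kraftSum_le h hi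
  have hTpos : 0 < kraftSum l T := kraftSum_pos (hR.mono hRT)
  obtain _ | k := k
  · simp [hk] at hTpos
  push_cast [add_one_mul] at hk
  have hTR : k * (1 / 2) ^ c ≤ kraftSum l (T \ R) := by
    rw [kraftSum_sdiff hRT, hk]
    linarith
  -- Extending `R` to Kraft sum `2 ^ (-c)` amounts to removing `k * 2 ^ (-c)` from outside `R`.
  obtain ⟨D, hD, hDk⟩ := exists_subset_kraftSum_eq k
    (fun i hi => (Finset.mem_filter.1 (Finset.sdiff_subset hi)).2) hTR
  refine ⟨T \ D, Finset.subset_sdiff.2 ⟨hRT, ?_⟩, ?_⟩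
  · exact Finset.disjoint_of_subset_right hD Finset.disjoint_sdiff
  · rw [kraftSum_sdiff (hD.trans Finset.sdiff_subset), hk, hDk, add_sub_cancel_left]

end CompleteCode

section Dominance

variable {ι : Type*} {p : ι → ℝ} {l : ι → ℕ}

/-- Strong monotonicity of the code lengths `l` for the source `p`: between sets of symbols whose
Kraft sums are powers of `1 / 2`, larger Kraft sum means at least as large probability. -/
def StronglyMonotone (p : ι → ℝ) (l : ι → ℕ) : Prop :=
  ∀ (X Y : Finset ι) (a b : ℕ), kraftSum l X = (1 / 2) ^ a → kraftSum l Y = (1 / 2) ^ b →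
    a < b → ∑ i ∈ Y, p i ≤ ∑ i ∈ X, p i

/-- A source is dyadic if each of its probabilities is a nonnegative integer power of `1 / 2`. -/
def IsDyadic (p : ι → ℝ) : Prop :=
  ∀ i, ∃ m : ℕ, p i = ((1 : ℝ) / 2) ^ m

lemma sum_lt_sum_of_subset_of_kraftSum_lt (hpos : ∀ i, 0 < p i) {A B : Finset ι} (hAB : A ⊆ B)
    (h : kraftSum l A < kraftSum l B) : ∑ i ∈ A, p i < ∑ i ∈ B, p i := by
  obtain ⟨x, hxB, hxA⟩ := Finset.not_subset.1 fun hBA => h.not_ge (kraftSum_mono hBA)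
  exact Finset.sum_lt_sum_of_subset hAB hxB hxA (hpos x) fun i _ _ => (hpos i).le

variable [Fintype ι]

lemma StronglyMonotone.kraftSum_filter_le_lt_sum (hsm : StronglyMonotone p l)
    (hpos : ∀ i, 0 < p i) (hcomplete : kraftSum l Finset.univ = 1) {Y : Finset ι} {c : ℕ}
    (hY : kraftSum l Y = (1 / 2) ^ (c + 1)) (hpY : (1 / 2) ^ c ≤ ∑ i ∈ Y, p i) :
    kraftSum l {i | c ≤ l i} < ∑ i with c ≤ l i, p i := by
  classical
  have hYne : Y.Nonempty := nonempty_of_kraftSum_pos (l := l) (hY ▸ by positivity)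
  have hYc : kraftSum l Y < (1 / 2) ^ c := hY ▸ half_pow_lt_half_pow_iff.2 c.lt_succ_self
  obtain ⟨Z, hYZ, hZ⟩ := exists_superset_kraftSum_eq_half_pow hcomplete hYne hYc.le
  obtain ⟨k, hk⟩ := exists_kraftSum_filter_le_eq_natCast_mul hcomplete c
  set T : Finset ι := {i | c ≤ l i} with hT
  have hZT : Z ⊆ T := fun i hi => by simpa [hT] using le_length_of_kraftSum_le hZ.le hi
  have hpZ : kraftSum l Z < ∑ i ∈ Z, p i :=
    (hZ.trans_le hpY).trans_lt (sum_lt_sum_of_subset_of_kraftSum_lt hpos hYZ (hZ ▸ hYc))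
  have hTpos : 0 < kraftSum l T := kraftSum_pos ((hYne.mono hYZ).mono hZT)
  obtain _ | k := k
  · simp [hk] at hTpos
  push_cast [add_one_mul] at hk
  have hdiff : kraftSum l (T \ Z) = k * (1 / 2) ^ c := by
    rw [kraftSum_sdiff hZT, hk, hZ, add_sub_cancel_right]
  have hpdiff : k * (1 / 2) ^ c ≤ ∑ i ∈ T \ Z, p i :=
    natCast_mul_le_sum_of_forall_kraftSum_eq
      (fun X _ hX => hpY.trans (hsm X Y c (c + 1) hX hY c.lt_succ_self))
      (fun i hi => (Finset.mem_filter.1 (Finset.sdiff_subset hi)).2) hdiff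
  rw [← Finset.sum_sdiff hZT]
  linarith [kraftSum_sdiff (l := l) hZT]

lemma StronglyMonotone.exists_length_lt_and_lt (hsm : StronglyMonotone p l)
    (hpos : ∀ i, 0 < p i) (hsum : ∑ i, p i ≤ 1) (hcomplete : kraftSum l Finset.univ = 1)
    {Y : Finset ι} {c : ℕ} (hY : kraftSum l Y = (1 / 2) ^ (c + 1))
    (hpY : (1 / 2) ^ c ≤ ∑ i ∈ Y, p i) : ∃ i, l i < c ∧ p i < (1 / 2) ^ l i := by
  by_contra! hshort
  have hlong := hsm.kraftSum_filter_le_lt_sum hpos hcomplete hY hpY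
  have hrest : kraftSum l {i | ¬ c ≤ l i} ≤ ∑ i with ¬ c ≤ l i, p i :=
    Finset.sum_le_sum fun i hi => hshort i (not_le.1 (Finset.mem_filter.1 hi).2)
  have hlt : kraftSum l Finset.univ < ∑ i, p i :=
    calc kraftSum l Finset.univ = kraftSum l {i | c ≤ l i} + kraftSum l {i | ¬ c ≤ l i} :=
          (Finset.sum_filter_add_sum_filter_not _ _ _).symm
      _ < (∑ i with c ≤ l i, p i) + ∑ i with ¬ c ≤ l i, p i := add_lt_add_of_lt_of_le hlong hrest
      _ = ∑ i, p i := Finset.sum_filter_add_sum_filter_not _ _ _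
  linarith

lemma StronglyMonotone.sum_two_mul_le_lt_sum_lt (hsm : StronglyMonotone p l)
    (hpos : ∀ i, 0 < p i) (hsum : ∑ i, p i ≤ 1) (hcomplete : kraftSum l Finset.univ = 1)
    (hlt : ∃ i, p i < (1 / 2) ^ l i) :
    ∑ i with 2 * (1 / 2) ^ l i ≤ p i, p i < ∑ i with p i < (1 / 2) ^ l i, p i := by
  set L : Finset ι := {i | 2 * (1 / 2) ^ l i ≤ p i}
  set W : Finset ι := {i | p i < (1 / 2) ^ l i} with hW
  have hWne : W.Nonempty := hlt.imp fun i hi => by simpa [hW] using hi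
  obtain hLe | hLne := L.eq_empty_or_nonempty
  · simpa only [hLe, Finset.sum_empty] using Finset.sum_pos (fun i _ => hpos i) hWne
  have hle_one (S : Finset ι) : kraftSum l S ≤ 1 := hcomplete ▸ kraftSum_mono S.subset_univ
  obtain ⟨a, hWa, -, X, hXW, hX⟩ := exists_subset_kraftSum_eq_half_pow_and_lt hWne (hle_one W)
  obtain ⟨b, -, hLb, Y, hYL, hY⟩ := exists_subset_kraftSum_eq_half_pow_and_lt hLne (hle_one L)
  have hpY : 2 * (1 / 2) ^ b ≤ ∑ i ∈ Y, p i := by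
    rw [← hY, kraftSum, Finset.mul_sum]
    exact Finset.sum_le_sum fun i hi => (Finset.mem_filter.1 (hYL hi)).2
  have hpY_one : ∑ i ∈ Y, p i ≤ 1 :=
    (Finset.sum_le_univ_sum_of_nonneg fun i => (hpos i).le).trans hsum
  obtain _ | c := b
  · linarith
  rw [two_mul_half_pow_succ] at hpY hLb
  obtain ⟨i, hic, hiW⟩ := hsm.exists_length_lt_and_lt hpos hsum hcomplete hY hpY
  have hac : a + 1 ≤ c := (hWa i (by simpa [hW] using hiW)).trans_lt hic
  have hLa : kraftSum l L < (1 / 2) ^ (a + 1) := hLb.trans_le (half_pow_le_half_pow_iff.2 hac)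
  obtain ⟨Z, hLZ, hZ⟩ := exists_superset_kraftSum_eq_half_pow hcomplete hLne hLa.le
  calc ∑ i ∈ L, p i < ∑ i ∈ Z, p i := sum_lt_sum_of_subset_of_kraftSum_lt hpos hLZ (hZ ▸ hLa)
    _ ≤ ∑ i ∈ X, p i := hsm X Z a (a + 1) hX hZ a.lt_succ_self
    _ ≤ ∑ i ∈ W, p i := Finset.sum_le_sum_of_subset_of_nonneg hXW fun i _ _ => (hpos i).le

lemma eq_half_pow_of_forall_half_pow_le (hsum : ∑ i, p i ≤ 1)
    (hcomplete : kraftSum l Finset.univ = 1) (h : ∀ i, (1 / 2) ^ l i ≤ p i) (i : ι) :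
    p i = (1 / 2) ^ l i :=
  have heq : ∑ i, ((1 : ℝ) / 2) ^ l i = ∑ i, p i :=
    (Finset.sum_le_sum fun i _ => h i).antisymm (hsum.trans_eq hcomplete.symm)
  ((Finset.sum_eq_sum_iff_of_le fun i _ => h i).1 heq i (Finset.mem_univ i)).symm

lemma IsDyadic.sum_lt_le_sum_two_mul_le (hdyadic : IsDyadic p) (hsum : 1 ≤ ∑ i, p i)
    (hcomplete : kraftSum l Finset.univ = 1) :
    ∑ i with p i < (1 / 2) ^ l i, p i ≤ ∑ i with 2 * (1 / 2) ^ l i ≤ p i, p i := by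
  have hpointwise (i : ι) : p i + (if p i < (1 / 2) ^ l i then p i else 0) ≤
      (1 / 2) ^ l i + if 2 * (1 / 2) ^ l i ≤ p i then p i else 0 := by
    obtain ⟨m, hm⟩ := hdyadic i
    rw [hm]
    have hl : (0 : ℝ) < (1 / 2) ^ l i := by positivity
    obtain hlt | heq | hgt := lt_trichotomy (((1 : ℝ) / 2) ^ m) ((1 / 2) ^ l i)
    · rw [if_pos hlt, if_neg (by linarith)]
      linarith [two_mul_half_pow_le_of_lt hlt]
    · rw [heq, if_neg (lt_irrefl _), if_neg (by linarith)]
    · rw [if_neg hgt.not_gt, if_pos (two_mul_half_pow_le_of_lt hgt)]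
      linarith
  have htotal := Finset.sum_le_sum fun i (_ : i ∈ Finset.univ) => hpointwise i
  rw [Finset.sum_add_distrib, Finset.sum_add_distrib, ← Finset.sum_filter,
    ← Finset.sum_filter] at htotal
  rw [kraftSum] at hcomplete
  linarith

lemma StronglyMonotone.eq_half_pow_of_isDyadic (hsm : StronglyMonotone p l)
    (hpos : ∀ i, 0 < p i) (hsum : ∑ i, p i = 1) (hcomplete : kraftSum l Finset.univ = 1)
    (hdyadic : IsDyadic p) (i : ι) : p i = (1 / 2) ^ l i := by
  refine eq_half_pow_of_forall_half_pow_le hsum.le hcomplete ?_ i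
  by_contra! hlt
  exact (hsm.sum_two_mul_le_lt_sum_lt hpos hsum.le hcomplete hlt).not_ge
    (hdyadic.sum_lt_le_sum_two_mul_le hsum.ge hcomplete)

theorem huffman_dominates_shannon_fano_general (hpos : ∀ i, 0 < p i) (hsum : ∑ i, p i = 1)
    (hcomplete : kraftSum l Finset.univ = 1) (hsm : StronglyMonotone p l) :
    ((∑ i with (l i : ℤ) < shannonFanoLength (p i), p i) >
        ∑ i with shannonFanoLength (p i) < (l i : ℤ), p i ↔ ¬ IsDyadic p) ∧
      (IsDyadic p → ∀ i, (l i : ℤ) = shannonFanoLength (p i)) := by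
  have hlength (hdyadic : IsDyadic p) (i : ι) : (l i : ℤ) = shannonFanoLength (p i) := by
    rw [hsm.eq_half_pow_of_isDyadic hpos hsum hcomplete hdyadic i, shannonFanoLength_half_pow]
  refine ⟨⟨fun hdom hdyadic => ?_, fun hdyadic => ?_⟩, hlength⟩
  · simp only [← hlength hdyadic, gt_iff_lt, lt_irrefl] at hdom
  · have hlt : ∃ i, p i < (1 / 2) ^ l i := by
      by_contra! hle
      exact hdyadic fun i => ⟨l i, eq_half_pow_of_forall_half_pow_le hsum.le hcomplete hle i⟩
    simpa only [natCast_lt_shannonFanoLength_iff (hpos _),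
      shannonFanoLength_lt_natCast_iff (hpos _)] using
      hsm.sum_two_mul_le_lt_sum_lt hpos hsum.le hcomplete hlt

end Dominance

/-- A Huffman code (complete, strongly monotone, expected-length optimal)
strictly competitively dominates the Shannon–Fano code (lengths
⌈log₂(1/p)⌉) if and only if the source is not dyadic; moreover for dyadic
sources the two codes are length equivalent. -/
theorem huffman_dominates_shannon_fano (n : ℕ) (p : Fin n → ℝ)
    (hpos : ∀ i, 0 < p i) (hsum : ∑ i, p i = 1)
    (lH : Fin n → ℕ)
    (hcomplete : ∑ i, ((1:ℝ)/2) ^ (lH i) = 1)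
    (hsm : ∀ (X Y : Finset (Fin n)) (a b : ℕ),
      (∑ x ∈ X, ((1:ℝ)/2) ^ (lH x)) = ((1:ℝ)/2) ^ a →
      (∑ x ∈ Y, ((1:ℝ)/2) ^ (lH x)) = ((1:ℝ)/2) ^ b →
      a < b → ∑ x ∈ Y, p x ≤ ∑ x ∈ X, p x)
    (hopt : ∀ l' : Fin n → ℕ, (∑ i, ((1:ℝ)/2) ^ (l' i) ≤ 1) →
      ∑ i, p i * lH i ≤ ∑ i, p i * l' i) :
    (((∑ i ∈ Finset.univ.filter
          (fun i => (lH i : ℤ) < ⌈Real.logb 2 (1 / p i)⌉), p i)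
      > ∑ i ∈ Finset.univ.filter
          (fun i => ⌈Real.logb 2 (1 / p i)⌉ < (lH i : ℤ)), p i)
      ↔ ¬ (∀ i, ∃ m : ℕ, p i = ((1:ℝ)/2) ^ m)) ∧
    ((∀ i, ∃ m : ℕ, p i = ((1:ℝ)/2) ^ m) →
      ∀ i, (lH i : ℤ) = ⌈Real.logb 2 (1 / p i)⌉) :=
  huffman_dominates_shannon_fano_general hpos hsum hcomplete hsm
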